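/- Let R be a commutative ring, S a multiplicative subset of R, and f : M → N an R-linear map of R-modules that is a u-S-monomorphism. If K is a u-S-essential submodule of M, then the image f(K) is a u-S-essential submodule of the R-module f(M) = range f. -/

import Mathlib

/-- `K` is a uniformly `S`-essential submodule of `M`: whenever a submodule `L`
satisfies `s₁ • (K ⊓ L) = 0` for some `s₁ ∈ S`, then `s₂ • L = 0` for some `s₂ ∈ S`. -/
def USEssential {R : Type*} [CommRing R] (S : Submonoid R) {M : Type*}
    [AddCommGroup M] [Module R M] (K : Submodule R M) : Prop :=
  ∀ L : Submodule R M,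
    (∃ s ∈ S, ∀ x ∈ K ⊓ L, s • x = 0) → ∃ s ∈ S, ∀ x ∈ L, s • x = 0

/-- `f` is a u-S-monomorphism: its kernel is u-S-torsion. -/
def IsUSMono {R : Type*} [CommRing R] (S : Submonoid R) {M N : Type*}
    [AddCommGroup M] [Module R M] [AddCommGroup N] [Module R N] (f : M →ₗ[R] N) : Prop :=
  ∃ s ∈ S, ∀ x ∈ LinearMap.ker f, s • x = 0

/-- `L` is uniformly `S`-torsion: a single `s ∈ S` annihilates all of `L`. It is phrased for
submodules because u-S-essentiality and u-S-monomorphisms test submodules and kernels. -/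
def IsUSTorsion {R : Type*} [CommRing R] (S : Submonoid R) {M : Type*}
    [AddCommGroup M] [Module R M] (L : Submodule R M) : Prop :=
  ∃ s ∈ S, ∀ x ∈ L, s • x = 0

section

variable {R M N : Type*} [CommRing R] {S : Submonoid R} [AddCommGroup M] [Module R M]
  [AddCommGroup N] [Module R N] {f : M →ₗ[R] N}

theorem IsUSTorsion.map {L : Submodule R M} (hL : IsUSTorsion S L) (f : M →ₗ[R] N) :
    IsUSTorsion S (L.map f) := by
  obtain ⟨s, hs, hsL⟩ := hL
  refine ⟨s, hs, ?_⟩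
  rintro _ ⟨x, hx, rfl⟩
  rw [← map_smul, hsL x hx, map_zero]

theorem IsUSMono.isUSTorsion_of_map (hf : IsUSMono S f) {L : Submodule R M}
    (hL : IsUSTorsion S (L.map f)) : IsUSTorsion S L := by
  obtain ⟨s, hs, hs_ker⟩ := hf
  obtain ⟨t, ht, ht_map⟩ := hL
  refine ⟨s * t, S.mul_mem hs ht, fun x hx => ?_⟩
  have htx : t • x ∈ LinearMap.ker f := by
    rw [LinearMap.mem_ker, map_smul, ht_map (f x) (Submodule.mem_map_of_mem hx)]
  rw [mul_smul, hs_ker _ htx]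

theorem IsUSMono.rangeRestrict (hf : IsUSMono S f) : IsUSMono S f.rangeRestrict := by
  rwa [IsUSMono, LinearMap.ker_rangeRestrict]

theorem USEssential.map_of_surjective {K : Submodule R M} (hK : USEssential S K)
    (hf : IsUSMono S f) (hf_surj : Function.Surjective f) : USEssential S (K.map f) := by
  intro L (hL : IsUSTorsion S (K.map f ⊓ L))
  have h_inf : IsUSTorsion S (K ⊓ L.comap f) :=
    hf.isUSTorsion_of_map <| by rwa [← Submodule.map_inf_eq_map_inf_comap]
  have h_comap : IsUSTorsion S (L.comap f) := hK _ h_inf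
  rw [← Submodule.map_comap_eq_of_surjective hf_surj L]
  exact h_comap.map f

end

/-- Proposition (prop5 (2)): if `K` is u-S-essential in `M` and `f` is a
u-S-monomorphism, then `f(K)` is u-S-essential in `f(M) = range f`. -/
theorem uSEssential_map_of_uSMono {R : Type*} [CommRing R] [Nontrivial R] (S : Submonoid R)
    (hS0 : (0 : R) ∉ S) {M N : Type*} [AddCommGroup M] [Module R M]
    [AddCommGroup N] [Module R N] (f : M →ₗ[R] N) (hf : IsUSMono S f)
    (K : Submodule R M) (hK : USEssential S K) :
    USEssential S ((K.map f).comap (LinearMap.range f).subtype) := by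
  have h_range : (K.map f).comap (LinearMap.range f).subtype = K.map f.rangeRestrict :=
    (LinearMap.map_codRestrict _ f _ K).symm
  rw [h_range]
  exact hK.map_of_surjective hf.rangeRestrict f.surjective_rangeRestrict
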